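/- (Solmon's identity on the sphere, k = 1.) Let d ≥ 2. There exists a constant c_d > 0, depending only on d, such that for every nonnegative Borel measurable function f : ℝ^d → [0,∞], ∫_{S^{d−1}} ∫_{v^⊥} |x| f(x) dH^{d−1}(x) dH^{d−1}(v) = c_d ∫_{ℝ^d} f(x) dx, where for each unit vector v ∈ S^{d−1}, v^⊥ denotes the hyperplane in ℝ^d orthogonal to v, H^{d−1} denotes (d−1)-dimensional Hausdorff measure (restricted to v^⊥ in the inner integral and to S^{d−1} in the outer integral), and dx is Lebesgue measure on ℝ^d. -/

import Mathlib

open MeasureTheory Real Metric Set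
open scoped RealInnerProductSpace ENNReal NNReal

noncomputable section

section Aux

set_option linter.unusedSectionVars false

variable {E : Type*} [NormedAddCommGroup E] [InnerProductSpace ℝ E] [FiniteDimensional ℝ E]
  [MeasurableSpace E] [BorelSpace E]

lemma exists_isometry_map {s t : E} (h : ‖s‖ = ‖t‖) : ∃ U : E ≃ₗᵢ[ℝ] E, U s = t :=
  ⟨_, Submodule.reflection_sub h⟩

lemma charFun_of_invariant {ν : Measure E} (hν : ∀ U : E ≃ₗᵢ[ℝ] E, ν.map U = ν)
    {s t : E} (h : ‖s‖ = ‖t‖) : charFun ν s = charFun ν t := by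
  obtain ⟨U, rfl⟩ := exists_isometry_map h
  conv_rhs => rw [← hν U]
  rw [charFun_apply, charFun_apply, integral_map U.continuous.measurable.aemeasurable (by fun_prop)]
  simp

lemma charFun_average {σ μ : Measure E} [IsFiniteMeasure σ] [IsFiniteMeasure μ]
    (hσ : ∀ U : E ≃ₗᵢ[ℝ] E, σ.map U = σ) (hμ : ∀ U : E ≃ₗᵢ[ℝ] E, μ.map U = μ)
    (hs : ∀ᵐ u ∂σ, ‖u‖ = 1) (t : E) :
    (σ.real univ : ℂ) * charFun μ t = ∫ r, charFun σ (r • t) ∂(μ.map norm) := by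
  have h1 : ∫ u, charFun μ (‖t‖ • u) ∂σ = (σ.real univ : ℂ) * charFun μ t := by
    rw [integral_congr_ae (g := fun _ => charFun μ t)]
    · simp
    · filter_upwards [hs] with u hu
      exact charFun_of_invariant hμ (by simp [norm_smul, hu])
  rw [← h1]
  rw [integral_map (by fun_prop)]
  · have h2 : ∀ x : E, charFun σ (‖x‖ • t) = charFun σ (‖t‖ • x) := fun x =>
      charFun_of_invariant hσ (by simp [norm_smul, mul_comm])
    simp_rw [h2]
    simp_rw [charFun_apply]
    rw [integral_integral_swap]
    · congr! 5 with x u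
      rw [inner_smul_right, inner_smul_right, real_inner_comm]
    · refine Integrable.of_bound (C := 1) ?_ ?_
      · apply Continuous.aestronglyMeasurable
        unfold Function.uncurry
        fun_prop
      · refine Filter.Eventually.of_forall fun p => ?_
        simp [Function.uncurry, Complex.norm_exp]
  · apply StronglyMeasurable.aestronglyMeasurable
    exact stronglyMeasurable_charFun.comp_measurable (by fun_prop)

lemma eq_of_invariant {σ μ ν : Measure E} [IsFiniteMeasure σ] [IsFiniteMeasure μ]
    [IsFiniteMeasure ν]
    (hσ : ∀ U : E ≃ₗᵢ[ℝ] E, σ.map U = σ) (hμ : ∀ U : E ≃ₗᵢ[ℝ] E, μ.map U = μ)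
    (hν : ∀ U : E ≃ₗᵢ[ℝ] E, ν.map U = ν)
    (hs : ∀ᵐ u ∂σ, ‖u‖ = 1) (h0 : σ ≠ 0) (h : μ.map norm = ν.map norm) : μ = ν := by
  apply Measure.ext_of_charFun
  funext t
  have h1 := charFun_average hσ hμ hs t
  rw [h, ← charFun_average hσ hν hs t] at h1
  refine mul_left_cancel₀ ?_ h1
  have : NeZero σ := ⟨h0⟩
  simp [measureReal_def, ENNReal.toReal_eq_zero_iff, h0]

lemma eq_smul_volume {σ ν : Measure E} [IsFiniteMeasure σ]
    (hσ : ∀ U : E ≃ₗᵢ[ℝ] E, σ.map U = σ)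
    (hν : ∀ U : E ≃ₗᵢ[ℝ] E, ν.map U = ν)
    (hs : ∀ᵐ u ∂σ, ‖u‖ = 1) (h0 : σ ≠ 0) {K : ℝ≥0∞} (hK : K ≠ ∞)
    (h : ∀ r : ℝ, 0 ≤ r → ν (closedBall 0 r) = K * volume (closedBall (0 : E) r)) :
    ν = K • (volume : Measure E) := by
  have hU : (⋃ n : ℕ, closedBall (0 : E) n) = univ := iUnion_closedBall_nat 0
  rw [← Measure.restrict_univ (μ := ν), ← Measure.restrict_univ (μ := K • volume), ← hU,
    Measure.restrict_iUnion_congr]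
  intro n
  have hfin : volume (closedBall (0 : E) n) < ∞ := measure_closedBall_lt_top
  have hfin2 : ν (closedBall (0 : E) n) < ∞ := by
    rw [h _ (by positivity)]; exact ENNReal.mul_lt_top hK.lt_top hfin
  have i1 : IsFiniteMeasure (ν.restrict (closedBall (0 : E) n)) := ⟨by simpa using hfin2⟩
  have i2 : IsFiniteMeasure ((K • (volume : Measure E)).restrict (closedBall (0 : E) n)) :=
    ⟨by simpa using ENNReal.mul_lt_top hK.lt_top hfin⟩
  have hr : ∀ μ : Measure E, (∀ U : E ≃ₗᵢ[ℝ] E, μ.map U = μ) → ∀ U : E ≃ₗᵢ[ℝ] E,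
      (μ.restrict (closedBall (0 : E) n)).map U = μ.restrict (closedBall (0 : E) n) := by
    intro μ hμ U
    conv_rhs => rw [← hμ U]
    rw [Measure.restrict_map U.continuous.measurable measurableSet_closedBall]
    congr 2
    simp
  refine eq_of_invariant hσ (hr _ hν) (hr _ ?_) hs h0 ?_
  · intro U
    rw [Measure.map_smul, U.measurePreserving.map_eq]
  · apply Measure.ext_of_Iic
    intro r
    rw [Measure.map_apply measurable_norm measurableSet_Iic,
      Measure.map_apply measurable_norm measurableSet_Iic,
      Measure.restrict_apply (measurable_norm measurableSet_Iic),
      Measure.restrict_apply (measurable_norm measurableSet_Iic)]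
    rcases lt_or_ge r 0 with hr | hr
    · have : (norm ⁻¹' Iic r : Set E) = ∅ := by
        ext x; simp; exact hr.trans_le (norm_nonneg x)
      simp [this]
    · have : (norm ⁻¹' Iic r ∩ closedBall 0 n : Set E) = closedBall 0 (min r n) := by
        ext x; simp
      rw [this, h _ (by positivity)]
      simp

open Module in
lemma isAddHaar_orth {n : ℕ} (hE : finrank ℝ E = n + 1) {v : E} (hv : ‖v‖ = 1) :
    Measure.IsAddHaarMeasure (μH[(n : ℝ)] : Measure (ℝ ∙ v)ᗮ) := by
  have : Fact (finrank ℝ E = n + 1) := ⟨hE⟩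
  have h := Submodule.finrank_orthogonal_span_singleton (𝕜 := ℝ) (n := n) (v := v)
    (by rintro rfl; simp at hv)
  have := isAddHaarMeasure_hausdorffMeasure (E := (ℝ ∙ v)ᗮ)
  rwa [h] at this

open Module Filter Topology in
lemma sphere_finite {n : ℕ} (hE : finrank ℝ E = n + 1) :
    (μH[(n : ℝ)] : Measure E) (sphere 0 1) < ∞ := by
  apply (isCompact_sphere (0 : E) 1).measure_lt_top_of_nhdsWithin
  intro x hx
  set v : E := -x with hv
  have hx1 : ‖x‖ = 1 := by simpa using hx
  have hv1 : ‖v‖ = 1 := by simp [hv, hx1]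
  have := isAddHaar_orth hE hv1
  obtain ⟨K, t, ht, hL⟩ :=
    ((contDiff_stereoInvFunAux (v := v) (m := 1)).comp
      (ℝ ∙ v)ᗮ.subtypeL.contDiff).contDiffAt (x := 0) |>.exists_lipschitzOnWith
  set g := stereoInvFunAux v ∘ (ℝ ∙ v)ᗮ.subtypeL
  set t' := t ∩ closedBall 0 1
  have ht' : t' ∈ 𝓝 0 := inter_mem ht (closedBall_mem_nhds _ one_pos)
  refine ⟨g '' t', ?_, ?_⟩
  · have hc : ContinuousAt (stereoToFun v) x := by
      apply continuousOn_stereoToFun.continuousAt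
      apply IsOpen.mem_nhds
      · exact isOpen_ne_fun (by fun_prop) (by fun_prop)
      · simp [hv, hx1]; norm_num
    have h0 : stereoToFun v x = 0 := by
      have : x = -v := by simp [hv]
      rw [this]
      simp
    rw [ContinuousAt, h0] at hc
    have hne : ∀ᶠ y in 𝓝 x, y ≠ v := by
      apply isOpen_ne.mem_nhds
      intro h
      have : (2 : ℝ) • x = 0 := by rw [two_smul]; nth_rw 1 [h]; simp [hv]
      simp at this
      simp [this] at hx1
    filter_upwards [self_mem_nhdsWithin, mem_nhdsWithin_of_mem_nhds (hc ht'),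
      mem_nhdsWithin_of_mem_nhds hne] with y hy hyt hyv
    refine ⟨_, hyt, ?_⟩
    exact congrArg Subtype.val (stereo_left_inv hv1 (x := ⟨y, hy⟩) hyv)
  · refine ((hL.mono inter_subset_left).hausdorffMeasure_image_le (by positivity)).trans_lt ?_
    refine ENNReal.mul_lt_top (by simp) ?_
    exact (measure_mono inter_subset_right).trans_lt measure_closedBall_lt_top

open Module in
lemma sphere_pos {n : ℕ} (hE : finrank ℝ E = n + 1) {e : E} (he : ‖e‖ = 1) :
    0 < (μH[(n : ℝ)] : Measure E) (sphere 0 1) := by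
  have := isAddHaar_orth hE he
  refine lt_of_lt_of_le ?_ (hausdorffMeasure_orthogonalProjectionOnto_le (ℝ ∙ e)ᗮ n
    (sphere (0 : E) 1) (by positivity))
  refine (measure_ball_pos (μH[(n : ℝ)] : Measure (ℝ ∙ e)ᗮ) 0 one_pos).trans_le (measure_mono ?_)
  intro y hy
  have hy1 : ‖(y : E)‖ < 1 := by simpa using hy
  have hye : ⟪(y : E), e⟫ = 0 := Submodule.mem_orthogonal_singleton_iff_inner_left.1 y.2
  refine ⟨y + √(1 - ‖(y : E)‖ ^ 2) • e, ?_, ?_⟩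
  · rw [mem_sphere_zero_iff_norm, ← sq_eq_sq₀ (by positivity) (by positivity),
      norm_add_sq_real, inner_smul_right, hye, norm_smul, he, mul_pow]
    simp
    rw [sq_sqrt]
    · ring
    · nlinarith [norm_nonneg (y : E)]
  · rw [map_add, map_smul, Submodule.orthogonalProjectionOnto_orthogonalComplement_singleton_eq_zero]
    simp

/-- The measure on the sphere -/
def sph (E : Type*) [NormedAddCommGroup E] [InnerProductSpace ℝ E]
    [MeasurableSpace E] [BorelSpace E] (n : ℕ) : Measure E :=
  (μH[(n : ℝ)] : Measure E).restrict (sphere 0 1)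

lemma map_restrict_hausdorff (n : ℕ) (U : E ≃ₗᵢ[ℝ] E) {s t : Set E} (ht : MeasurableSet t)
    (h : U ⁻¹' t = s) :
    ((μH[(n : ℝ)] : Measure E).restrict s).map U = (μH[(n : ℝ)] : Measure E).restrict t := by
  have h1 : (μH[(n : ℝ)] : Measure E).map U = μH[(n : ℝ)] :=
    U.toIsometryEquiv.map_hausdorffMeasure n
  conv_rhs => rw [← h1]
  rw [Measure.restrict_map U.continuous.measurable ht, h]

lemma sph_inv (n : ℕ) (U : E ≃ₗᵢ[ℝ] E) : (sph E n).map U = sph E n := by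
  apply map_restrict_hausdorff
  · exact isClosed_sphere.measurableSet
  · simp

/-- The reflection exchanging `e` and `v` -/
def rot (e v : E) : E ≃ₗᵢ[ℝ] E := (ℝ ∙ (e - v))ᗮ.reflection

lemma rot_apply (e v x : E) :
    rot e v x = x - (2 : ℝ) • (⟪e - v, x⟫ / ‖e - v‖ ^ 2) • (e - v) := by
  rw [rot, Submodule.reflection_orthogonal_apply, Submodule.reflection_singleton_apply]
  simp [two_smul]

lemma measurable_rot (e : E) : Measurable fun p : E × (ℝ ∙ e)ᗮ => rot e p.1 (p.2 : E) := by
  simp_rw [rot_apply]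
  fun_prop

lemma measurableSet_orth (v : E) : MeasurableSet {x : E | ⟪v, x⟫ = 0} :=
  (isClosed_eq (by fun_prop) (by fun_prop)).measurableSet

lemma lintegral_orth {n : ℕ} {e v : E} (he : ‖e‖ = 1) (hv : ‖v‖ = 1) {g : E → ℝ≥0∞}
    (hg : Measurable g) :
    ∫⁻ x in {x : E | ⟪v, x⟫ = 0}, g x ∂(μH[(n : ℝ)]) =
      ∫⁻ y : (ℝ ∙ e)ᗮ, g (rot e v y) ∂(μH[(n : ℝ)]) := by
  have hR : rot e v e = v := Submodule.reflection_sub (he.trans hv.symm)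
  have h1 : ((μH[(n : ℝ)] : Measure (ℝ ∙ e)ᗮ)).map Subtype.val =
      (μH[(n : ℝ)] : Measure E).restrict {x : E | ⟪e, x⟫ = 0} := by
    rw [isometry_subtype_coe.map_hausdorffMeasure (Or.inl (by positivity))]
    congr 1
    ext x
    simp [Submodule.mem_orthogonal_singleton_iff_inner_right]
  rw [← map_restrict_hausdorff n (rot e v) (measurableSet_orth v) (s := {x : E | ⟪e, x⟫ = 0}),
    ← h1, lintegral_map hg (rot e v).continuous.measurable, lintegral_map]
  · exact hg.comp (rot e v).continuous.measurable
  · exact measurable_subtype_coe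
  · ext x
    have h2 : ⟪v, rot e v x⟫ = ⟪e, x⟫ := by
      have h3 := (rot e v).inner_map_map e x
      rwa [hR] at h3
    simp [h2]

/-- The Solmon measure -/
def solm (n : ℕ) (e : E) : Measure E :=
  (((sph E n).prod (μH[(n : ℝ)] : Measure (ℝ ∙ e)ᗮ)).withDensity
    (fun p => ENNReal.ofReal ‖p.2‖)).map (fun p => rot e p.1 (p.2 : E))

open Module

lemma lintegral_solm' {n : ℕ} (hE : finrank ℝ E = n + 1) {e : E} (he : ‖e‖ = 1) {f : E → ℝ≥0∞}
    (hf : Measurable f) :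
    ∫⁻ x, f x ∂(solm n e) = ∫⁻ v, ∫⁻ y : (ℝ ∙ e)ᗮ, ENNReal.ofReal ‖y‖ * f (rot e v y)
      ∂(μH[(n : ℝ)]) ∂(sph E n) := by
  have := isAddHaar_orth hE he
  have hm := measurable_rot e
  have hd : Measurable (fun p : E × (ℝ ∙ e)ᗮ => ENNReal.ofReal ‖p.2‖) := by fun_prop
  rw [solm, lintegral_map hf hm, lintegral_withDensity_eq_lintegral_mul _ hd
    (g := fun p => f (rot e p.1 (p.2 : E))) (hf.comp hm),
    lintegral_prod]
  · rfl
  · exact (hd.mul (hf.comp hm)).aemeasurable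

lemma sph_norm (n : ℕ) : ∀ᵐ v ∂(sph E n), ‖v‖ = 1 := by
  filter_upwards [ae_restrict_mem (μ := μH[(n : ℝ)]) (isClosed_sphere (x := (0 : E)) (ε := 1)).measurableSet]
    with v hv
  simpa using hv

lemma lintegral_solm {n : ℕ} (hE : finrank ℝ E = n + 1) {e : E} (he : ‖e‖ = 1) {f : E → ℝ≥0∞}
    (hf : Measurable f) :
    ∫⁻ x, f x ∂(solm n e) = ∫⁻ v, ∫⁻ x in {x : E | ⟪v, x⟫ = 0}, ENNReal.ofReal ‖x‖ * f x
      ∂(μH[(n : ℝ)]) ∂(sph E n) := by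
  rw [lintegral_solm' hE he hf]
  apply lintegral_congr_ae
  filter_upwards [sph_norm n] with v hv
  rw [lintegral_orth he hv (by fun_prop)]
  simp

lemma solm_inv {n : ℕ} (hE : finrank ℝ E = n + 1) {e : E} (he : ‖e‖ = 1) (U : E ≃ₗᵢ[ℝ] E) :
    (solm n e).map U = solm n e := by
  have hU := U.continuous.measurable
  have key : ∀ f : E → ℝ≥0∞, Measurable f →
      ∫⁻ x, f x ∂((solm n e).map U) = ∫⁻ x, f x ∂(solm n e) := by
    intro f hf
    rw [lintegral_map hf hU, lintegral_solm hE he hf, lintegral_solm hE he (f := fun x => f (U x))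
      (hf.comp hU)]
    conv_rhs => rw [← sph_inv n U]
    rw [show (⇑U) = U.toHomeomorph.toMeasurableEquiv from rfl, lintegral_map_equiv]
    congr 1 with v
    change _ = ∫⁻ x in {x : E | ⟪U v, x⟫ = 0}, ENNReal.ofReal ‖x‖ * f x ∂(μH[(n : ℝ)])
    rw [← map_restrict_hausdorff n U (measurableSet_orth (U v)) (s := {x : E | ⟪v, x⟫ = 0}),
      lintegral_map (by fun_prop) hU]
    · simp only [LinearIsometryEquiv.norm_map]
      rfl
    · ext x
      simp
  ext s hs
  have := key (s.indicator 1) (measurable_one.indicator hs)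
  rwa [lintegral_indicator_one hs, lintegral_indicator_one hs] at this

lemma scale {n : ℕ} (hE : finrank ℝ E = n + 1) {e : E} (he : ‖e‖ = 1) {r : ℝ} (hr : 0 ≤ r) :
    ∫⁻ y in closedBall (0 : (ℝ ∙ e)ᗮ) r, ENNReal.ofReal ‖y‖ ∂(μH[(n : ℝ)]) =
      ENNReal.ofReal (r ^ (n + 1)) *
      ∫⁻ y in closedBall (0 : (ℝ ∙ e)ᗮ) 1, ENNReal.ofReal ‖y‖ ∂(μH[(n : ℝ)]) := by
  have := isAddHaar_orth hE he
  have : Fact (finrank ℝ E = n + 1) := ⟨hE⟩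
  have hfr := Submodule.finrank_orthogonal_span_singleton (𝕜 := ℝ) (n := n) (v := e)
    (by rintro rfl; simp at he)
  rcases hr.eq_or_lt with rfl | hr
  · simp
  have h1 := Measure.map_addHaar_smul (μH[(n : ℝ)] : Measure (ℝ ∙ e)ᗮ) hr.ne'
  rw [hfr] at h1
  have hm : Measurable ((closedBall (0 : (ℝ ∙ e)ᗮ) r).indicator
      (fun y => ENNReal.ofReal ‖y‖)) := by
    apply Measurable.indicator (by fun_prop) measurableSet_closedBall
  have h2 : ∫⁻ y, (closedBall (0 : (ℝ ∙ e)ᗮ) r).indicator (fun y => ENNReal.ofReal ‖y‖) y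
      ∂((μH[(n : ℝ)] : Measure (ℝ ∙ e)ᗮ).map (r • ·)) = ENNReal.ofReal r *
      ∫⁻ y in closedBall (0 : (ℝ ∙ e)ᗮ) 1, ENNReal.ofReal ‖y‖ ∂(μH[(n : ℝ)]) := by
    rw [lintegral_map hm (by fun_prop), ← lintegral_indicator measurableSet_closedBall,
      ← lintegral_const_mul' _ _ (by simp)]
    congr 1 with y
    simp only [indicator, mem_closedBall_zero_iff, norm_smul, norm_of_nonneg hr.le,
      mul_le_iff_le_one_right hr]
    split_ifs
    · rw [ENNReal.ofReal_mul hr.le]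
    · simp
  rw [h1, lintegral_smul_measure, lintegral_indicator measurableSet_closedBall,
    abs_of_nonneg (by positivity), smul_eq_mul] at h2
  rw [pow_succ, ENNReal.ofReal_mul (by positivity), mul_assoc, ← h2, ← mul_assoc,
    ← ENNReal.ofReal_mul (by positivity), mul_inv_cancel₀ (by positivity)]
  simp

lemma solm_ball {n : ℕ} (hE : finrank ℝ E = n + 1) {e : E} (he : ‖e‖ = 1) (r : ℝ) :
    solm n e (closedBall 0 r) = sph E n univ *
      ∫⁻ y in closedBall (0 : (ℝ ∙ e)ᗮ) r, ENNReal.ofReal ‖y‖ ∂(μH[(n : ℝ)]) := by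
  rw [← lintegral_indicator_one measurableSet_closedBall,
    lintegral_solm' hE he (measurable_one.indicator measurableSet_closedBall),
    ← lintegral_indicator measurableSet_closedBall, mul_comm, ← lintegral_const]
  congr! 4 with v y
  simp [indicator]

lemma main_aux {n : ℕ} (hn : 1 ≤ n) (hE : finrank ℝ E = n + 1) :
    ∃ c : ℝ, 0 < c ∧ ∀ f : E → ℝ≥0∞, Measurable f →
      ∫⁻ v in sphere (0 : E) 1,
        (∫⁻ x in {x : E | ⟪v, x⟫ = 0}, ENNReal.ofReal ‖x‖ * f x ∂(μH[(n : ℝ)])) ∂(μH[(n : ℝ)])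
        = ENNReal.ofReal c * ∫⁻ x, f x := by
  have : Nontrivial E := Module.nontrivial_of_finrank_pos (R := ℝ) (by omega)
  obtain ⟨e, he⟩ := exists_norm_eq E (zero_le_one (α := ℝ))
  have := isAddHaar_orth hE he
  have hF : Fact (finrank ℝ E = n + 1) := ⟨hE⟩
  have hfr := Submodule.finrank_orthogonal_span_singleton (𝕜 := ℝ) (n := n) (v := e)
    (by rintro rfl; simp at he)
  have : Nontrivial (ℝ ∙ e)ᗮ := Module.nontrivial_of_finrank_pos (R := ℝ) (by omega)
  set J := ∫⁻ y in closedBall (0 : (ℝ ∙ e)ᗮ) 1, ENNReal.ofReal ‖y‖ ∂(μH[(n : ℝ)]) with hJ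
  have hJ0 : J ≠ 0 := by
    apply ne_of_gt
    rw [hJ, setLIntegral_pos_iff (by fun_prop)]
    obtain ⟨z, hz⟩ := exists_norm_eq (ℝ ∙ e)ᗮ (show (0 : ℝ) ≤ 1 / 2 by norm_num)
    have ho : IsOpen (ball (0 : (ℝ ∙ e)ᗮ) 1 ∩ {0}ᶜ) := isOpen_ball.inter isOpen_compl_singleton
    refine (ho.measure_pos (μH[(n : ℝ)]) ⟨z, ?_⟩).trans_le (measure_mono ?_)
    · constructor
      · simp [hz]; norm_num
      · rintro rfl; simp at hz
    · rintro y ⟨h1, h2⟩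
      refine ⟨?_, ball_subset_closedBall h1⟩
      simpa using h2
  have hJt : J ≠ ∞ := by
    apply ne_of_lt
    calc J ≤ ∫⁻ y in closedBall (0 : (ℝ ∙ e)ᗮ) 1, 1 ∂(μH[(n : ℝ)]) := by
          apply setLIntegral_mono measurable_one
          intro y hy
          exact ENNReal.ofReal_le_one.2 (mem_closedBall_zero_iff.1 hy)
      _ < ∞ := by simpa using measure_closedBall_lt_top
  have hS : sph E n univ = μH[(n : ℝ)] (sphere (0 : E) 1) := by simp [sph]
  have hfin : IsFiniteMeasure (sph E n) := ⟨by rw [hS]; exact sphere_finite hE⟩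
  have hS0 : sph E n univ ≠ 0 := by rw [hS]; exact (sphere_pos hE he).ne'
  set V := volume (closedBall (0 : E) 1) with hV
  have hV0 : V ≠ 0 := (measure_closedBall_pos _ _ one_pos).ne'
  have hVt : V ≠ ∞ := measure_closedBall_lt_top.ne
  set K := sph E n univ * J / V with hK
  have hKt : K ≠ ∞ := ENNReal.div_ne_top (ENNReal.mul_ne_top (measure_ne_top _ _) hJt) hV0
  have hK0 : K ≠ 0 := by
    simp [hK, ENNReal.div_eq_zero_iff, hJ0, hVt]
    simpa using hS0
  refine ⟨K.toReal, ENNReal.toReal_pos hK0 hKt, fun f hf => ?_⟩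
  have hmain : solm n e = K • (volume : Measure E) := by
    refine eq_smul_volume (σ := sph E n) (sph_inv n) (solm_inv hE he) (sph_norm n) ?_ hKt ?_
    · intro h; simp [h] at hS0
    · intro r hr
      rw [solm_ball hE he, scale hE he hr, Measure.addHaar_closedBall' _ _ hr, hE, ← hV, ← hJ, hK,
        mul_left_comm, mul_left_comm (_ / _), ENNReal.div_mul_cancel hV0 hVt]
  rw [ENNReal.ofReal_toReal hKt]
  have := lintegral_solm hE he hf
  rw [hmain, lintegral_smul_measure] at this
  exact this.symm

end Aux

/-- Solmon's identity on the sphere, `k = 1`. There is a constant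
`c_d > 0` such that for every nonnegative Borel function `f` on `ℝ^d`,
`∫_{S^{d-1}} ∫_{v^⊥} |x| f(x) dH^{d-1}(x) dH^{d-1}(v) = c_d ∫_{ℝ^d} f(x) dx`. -/
theorem solmon_identity (d : ℕ) (hd : 2 ≤ d) :
    ∃ c : ℝ, 0 < c ∧ ∀ f : EuclideanSpace ℝ (Fin d) → ℝ≥0∞, Measurable f →
      ∫⁻ v in sphere (0 : EuclideanSpace ℝ (Fin d)) 1,
        (∫⁻ x in {x : EuclideanSpace ℝ (Fin d) | ⟪v, x⟫ = 0},
            ENNReal.ofReal ‖x‖ * f x ∂(μH[(d : ℝ) - 1]))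
          ∂(μH[(d : ℝ) - 1])
        = ENNReal.ofReal c * ∫⁻ x, f x := by
  obtain ⟨n, rfl⟩ : ∃ n, d = n + 1 := ⟨d - 1, by omega⟩
  have h : ((n + 1 : ℕ) : ℝ) - 1 = n := by push_cast; ring
  rw [h]
  exact main_aux (by omega) (by simp)
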